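/- arXiv:2204.00870 — 2 statements merged into one kernel-verified Lean document; each statement's English description precedes it below -/
import Mathlib

section
/- Let T_new and T_old be two terminating transition systems sharing an input type X, input set Θ₀, and initial-state maps ι_new, ι_old. Suppose φ_new is a potential function for T_new, χ_old is an anti-potential function for T_old, and t ∈ ℝ satisfies φ_new(ι_new x) − χ_old(ι_old x) ≤ t for every x ∈ Θ₀. Then t is a threshold for the differential cost analysis (DiffCost) problem: for every x ∈ Θ₀, every run ρ_new from ι_new x in T_new and every run ρ_old from ι_old x in T_old satisfy Cost(ρ_new) − Cost(ρ_old) ≤ t. -/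
/-- A run of the transition system from state `s`. -/
def IsRun {S : Type*} (step : S → S → Prop) (s : S) (ρ : ℕ → S) : Prop :=
  ρ 0 = s ∧ ∀ n, step (ρ n) (ρ (n + 1))

/-- `s'` is reachable from `s`. -/
def ReachableFrom {S : Type*} (step : S → S → Prop) (s s' : S) : Prop :=
  ∃ ρ n, IsRun step s ρ ∧ ρ n = s'

/-- `s'` is reachable from some initial state in `Init`. -/
def Reachable {S : Type*} (step : S → S → Prop) (Init : Set S) (s' : S) : Prop :=
  ∃ s ∈ Init, ReachableFrom step s s'

/-- The system is terminating: every run from a reachable state visits a terminal state. -/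
def Terminating {S : Type*} (step : S → S → Prop) (Term Init : Set S) : Prop :=
  ∀ s, Reachable step Init s → ∀ ρ, IsRun step s ρ → ∃ n, ρ n ∈ Term

/-- The cost of a run: `c (ρ N) - c (ρ 0)` where `N` is the least index with `ρ N ∈ Term`. -/
noncomputable def RunCost {S : Type*} (Term : Set S) (c : S → ℤ) (ρ : ℕ → S) : ℤ :=
  c (ρ (sInf {n | ρ n ∈ Term})) - c (ρ 0)

/-- Potential function: sufficiency preservation and sufficiency on termination. -/
def IsPF {S : Type*} (step : S → S → Prop) (Term Init : Set S) (c : S → ℤ)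
    (φ : S → ℝ) : Prop :=
  (∀ s s', Reachable step Init s → step s s' →
    φ s ≥ φ s' + ((c s' : ℝ) - (c s : ℝ))) ∧
  (∀ s, Reachable step Init s → s ∈ Term → φ s ≥ 0)

/-- Anti-potential function: insufficiency preservation and insufficiency on termination. -/
def IsAntiPF {S : Type*} (step : S → S → Prop) (Term Init : Set S) (c : S → ℤ)
    (χ : S → ℝ) : Prop :=
  (∀ s s', Reachable step Init s → step s s' →
    χ s ≤ χ s' + ((c s' : ℝ) - (c s : ℝ))) ∧
  (∀ s, Reachable step Init s → s ∈ Term → χ s ≤ 0)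

/-- `t` is a threshold for the DiffCost problem. -/
noncomputable def IsThreshold {Sn So X : Type*}
    (stepN : Sn → Sn → Prop) (TermN : Set Sn) (cN : Sn → ℤ)
    (stepO : So → So → Prop) (TermO : Set So) (cO : So → ℤ)
    (Θ₀ : Set X) (ιN : X → Sn) (ιO : X → So) (t : ℝ) : Prop :=
  ∀ x ∈ Θ₀, ∀ ρN : ℕ → Sn, IsRun stepN (ιN x) ρN →
    ∀ ρO : ℕ → So, IsRun stepO (ιO x) ρO →
      ((RunCost TermN cN ρN : ℝ) - (RunCost TermO cO ρO : ℝ)) ≤ t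

/-- Every state on a run from an initial state is reachable. -/
theorem IsRun.reachable {S : Type*} {step : S → S → Prop} {Init : Set S} {s : S} {ρ : ℕ → S}
    (hρ : IsRun step s ρ) (hs : s ∈ Init) (n : ℕ) : Reachable step Init (ρ n) :=
  ⟨s, hs, ρ, n, hρ, rfl⟩

/-- In a terminating system, a run from an initial state is terminal at the index where
its cost is read off. -/
theorem Terminating.sInf_mem {S : Type*} {step : S → S → Prop} {Term Init : Set S}
    (hterm : Terminating step Term Init) {s : S} (hs : s ∈ Init) {ρ : ℕ → S}
    (hρ : IsRun step s ρ) : ρ (sInf {n | ρ n ∈ Term}) ∈ Term :=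
  Nat.sInf_mem (s := {n | ρ n ∈ Term})
    (hterm s ⟨s, hs, ρ, 0, hρ, hρ.1⟩ ρ hρ)

/-- Along a run, a potential function pays for the cost accumulated so far. -/
theorem IsPF.add_cost_le {S : Type*} {step : S → S → Prop} {Term Init : Set S} {c : S → ℤ}
    {φ : S → ℝ} (hφ : IsPF step Term Init c φ) {s : S} (hs : s ∈ Init) {ρ : ℕ → S}
    (hρ : IsRun step s ρ) (n : ℕ) : φ (ρ n) + ((c (ρ n) : ℝ) - c (ρ 0)) ≤ φ (ρ 0) := by
  induction n with
  | zero => simp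
  | succ n ih =>
    have hstep := hφ.1 _ _ (hρ.reachable hs n) (hρ.2 n)
    linarith

/-- A potential function bounds the cost of every run from above. -/
theorem IsPF.runCost_le {S : Type*} {step : S → S → Prop} {Term Init : Set S} {c : S → ℤ}
    {φ : S → ℝ} (hφ : IsPF step Term Init c φ) (hterm : Terminating step Term Init)
    {s : S} (hs : s ∈ Init) {ρ : ℕ → S} (hρ : IsRun step s ρ) :
    (RunCost Term c ρ : ℝ) ≤ φ s := by
  have hend := hφ.2 _ (hρ.reachable hs _) (hterm.sInf_mem hs hρ)
  have hcost := hφ.add_cost_le hs hρ (sInf {n | ρ n ∈ Term})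
  rw [← hρ.1, RunCost]
  push_cast
  linarith

/-- Negating an anti-potential function gives a potential function for the negated costs. -/
theorem IsAntiPF.neg {S : Type*} {step : S → S → Prop} {Term Init : Set S} {c : S → ℤ}
    {χ : S → ℝ} (hχ : IsAntiPF step Term Init c χ) : IsPF step Term Init (-c) (-χ) := by
  refine ⟨fun s s' hs hstep => ?_, fun s hs hT => ?_⟩
  · have hle := hχ.1 s s' hs hstep
    simp only [Pi.neg_apply, Int.cast_neg]
    linarith
  · exact neg_nonneg.mpr (hχ.2 s hs hT)

/-- An anti-potential function bounds the cost of every run from below. -/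
theorem IsAntiPF.le_runCost {S : Type*} {step : S → S → Prop} {Term Init : Set S} {c : S → ℤ}
    {χ : S → ℝ} (hχ : IsAntiPF step Term Init c χ) (hterm : Terminating step Term Init)
    {s : S} (hs : s ∈ Init) {ρ : ℕ → S} (hρ : IsRun step s ρ) :
    χ s ≤ RunCost Term c ρ := by
  have hneg := hχ.neg.runCost_le hterm hs hρ
  simp only [RunCost, Pi.neg_apply, Int.cast_sub, Int.cast_neg] at hneg ⊢
  linarith

/-- if a PF for the new system and an anti-PF for the old system witness
the value `t` on all inputs, then `t` is a threshold for the DiffCost problem. -/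
theorem pf_antipf_threshold {Sn So X : Type*}
    (stepN : Sn → Sn → Prop) (TermN : Set Sn) (cN : Sn → ℤ)
    (stepO : So → So → Prop) (TermO : Set So) (cO : So → ℤ)
    (Θ₀ : Set X) (ιN : X → Sn) (ιO : X → So)
    (htotalN : ∀ s : Sn, ∃ s', stepN s s')
    (htotalO : ∀ s : So, ∃ s', stepO s s')
    (hTermN : ∀ s ∈ TermN, ∀ s', stepN s s' → s' = s)
    (hTermO : ∀ s ∈ TermO, ∀ s', stepO s s' → s' = s)
    (hterminatingN : Terminating stepN TermN (ιN '' Θ₀))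
    (hterminatingO : Terminating stepO TermO (ιO '' Θ₀))
    (φN : Sn → ℝ) (hφN : IsPF stepN TermN (ιN '' Θ₀) cN φN)
    (χO : So → ℝ) (hχO : IsAntiPF stepO TermO (ιO '' Θ₀) cO χO)
    (t : ℝ) (ht : ∀ x ∈ Θ₀, φN (ιN x) - χO (ιO x) ≤ t) :
    IsThreshold stepN TermN cN stepO TermO cO Θ₀ ιN ιO t := by
  intro x hx ρN hρN ρO hρO
  have hN := hφN.runCost_le hterminatingN (Set.mem_image_of_mem ιN hx) hρN
  have hO := hχO.le_runCost hterminatingO (Set.mem_image_of_mem ιO hx) hρO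
  linarith [ht x hx]
end

section
/- Completeness of potentials and anti-potentials for differential cost analysis: let T_new and T_old be two terminating transition systems sharing an input type X, input set Θ₀, and initial-state maps ι_new, ι_old. Assume that for every state reachable in T_new the set of run costs from that state is bounded above, and that for every state reachable in T_old the set of run costs from that state is bounded below. If t ∈ ℝ is a threshold for the DiffCost problem, then there exist a potential function φ_new for T_new and an anti-potential function χ_old for T_old such that φ_new(ι_new x) − χ_old(ι_old x) ≤ t for every x ∈ Θ₀. -/
theorem exists_isRun {S : Type*} {step : S → S → Prop} (htotal : ∀ s, ∃ s', step s s') (s : S) :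
    ∃ ρ, IsRun step s ρ := by
  choose next hnext using htotal
  exact ⟨fun n => next^[n] s, rfl, fun n => by
    simpa only [Function.iterate_succ_apply'] using hnext _⟩

theorem IsRun.cons {S : Type*} {step : S → S → Prop} {s s' : S} {ρ : ℕ → S}
    (hρ : IsRun step s' ρ) (h : step s s') :
    IsRun step s (fun n => Nat.casesOn n s ρ) := by
  refine ⟨rfl, fun n => ?_⟩
  cases n with
  | zero => simpa [hρ.1] using h
  | succ n => exact hρ.2 n

theorem Reachable.of_mem {S : Type*} {step : S → S → Prop} {Init : Set S}
    (htotal : ∀ s, ∃ s', step s s') {s : S} (hs : s ∈ Init) : Reachable step Init s :=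
  let ⟨ρ, hρ⟩ := exists_isRun htotal s
  ⟨s, hs, ρ, 0, hρ, hρ.1⟩

theorem Reachable.step {S : Type*} {step : S → S → Prop} {Init : Set S}
    (htotal : ∀ s, ∃ s', step s s') {s s' : S} (hs : Reachable step Init s) (h : step s s') :
    Reachable step Init s' := by
  obtain ⟨s₀, hs₀, ρ, n, hρ, rfl⟩ := hs
  obtain ⟨σ, hσ⟩ := exists_isRun htotal s'
  refine ⟨s₀, hs₀, fun k => if k ≤ n then ρ k else σ (k - (n + 1)), n + 1, ⟨?_, fun k => ?_⟩, ?_⟩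
  · simpa using hρ.1
  · rcases lt_trichotomy k n with hk | rfl | hk
    · simpa [hk.le, Nat.succ_le_of_lt hk] using hρ.2 k
    · simpa [hσ.1] using h
    · have hsub : k + 1 - (n + 1) = k - (n + 1) + 1 := by omega
      simpa only [if_neg (show ¬ k ≤ n by omega), if_neg (show ¬ k + 1 ≤ n by omega), hsub]
        using hσ.2 (k - (n + 1))
  · simpa using hσ.1

/-- A run starting in a terminal state has cost zero. -/
theorem RunCost.eq_zero {S : Type*} {Term : Set S} (c : S → ℤ) {ρ : ℕ → S} (h : ρ 0 ∈ Term) :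
    RunCost Term c ρ = 0 := by
  have h0 : sInf {n | ρ n ∈ Term} = 0 := Nat.sInf_eq_zero.2 (Or.inl h)
  simp [RunCost, h0]

theorem RunCost.neg {S : Type*} (Term : Set S) (c : S → ℤ) (ρ : ℕ → S) :
    RunCost Term (-c) ρ = -RunCost Term c ρ := by
  simp only [RunCost, Pi.neg_apply]
  ring

/-- Prepending a step to a run which visits a terminal state adds the cost of that step. -/
theorem RunCost.cons {S : Type*} {step : S → S → Prop} {Term : Set S} (c : S → ℤ)
    (hTerm : ∀ s ∈ Term, ∀ s', step s s' → s' = s) {s s' : S} {ρ : ℕ → S}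
    (hρ : IsRun step s' ρ) (h : step s s') (hvisit : ∃ n, ρ n ∈ Term) :
    RunCost Term c (fun n => Nat.casesOn n s ρ) = RunCost Term c ρ + (c s' - c s) := by
  by_cases hs : s ∈ Term
  · obtain rfl := hTerm s hs s' h
    rw [RunCost.eq_zero c (by exact hs), RunCost.eq_zero c (by rwa [hρ.1])]
    simp
  · let σ : ℕ → S := fun n => Nat.casesOn n s ρ
    have hpos : 0 < sInf {n | σ n ∈ Term} := by
      refine Nat.pos_of_ne_zero fun h0 => ?_
      rcases Nat.sInf_eq_zero.1 h0 with h0 | h0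
      · exact hs h0
      · obtain ⟨n, hn⟩ := hvisit
        exact (h0 ▸ (show n + 1 ∈ {n | σ n ∈ Term} from hn) : n + 1 ∈ (∅ : Set ℕ))
    have hshift : sInf {n | ρ n ∈ Term} + 1 = sInf {n | σ n ∈ Term} :=
      Nat.sInf_add (p := fun n => σ n ∈ Term) hpos
    change c (σ (sInf {n | σ n ∈ Term})) - c s = _
    rw [← hshift]
    change c (ρ _) - c s = c (ρ _) - c (ρ 0) + _
    rw [hρ.1]
    ring

/-- If run costs are bounded above from each reachable state, the worst-case cost is a
potential function. -/
theorem exists_isPF_isLUB {S : Type*} {step : S → S → Prop} {Term Init : Set S} {c : S → ℤ}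
    (htotal : ∀ s, ∃ s', step s s') (hTerm : ∀ s ∈ Term, ∀ s', step s s' → s' = s)
    (hterminating : Terminating step Term Init)
    (hbdd : ∀ s, Reachable step Init s →
      BddAbove {x : ℝ | ∃ ρ : ℕ → S, IsRun step s ρ ∧ x = (RunCost Term c ρ : ℝ)}) :
    ∃ φ : S → ℝ, IsPF step Term Init c φ ∧ ∀ s, Reachable step Init s →
      IsLUB {x : ℝ | ∃ ρ : ℕ → S, IsRun step s ρ ∧ x = (RunCost Term c ρ : ℝ)} (φ s) := by
  let φ : S → ℝ := fun s => sSup {x | ∃ ρ, IsRun step s ρ ∧ x = (RunCost Term c ρ : ℝ)}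
  have hlub : ∀ s, Reachable step Init s →
      IsLUB {x : ℝ | ∃ ρ : ℕ → S, IsRun step s ρ ∧ x = (RunCost Term c ρ : ℝ)} (φ s) := by
    intro s hs
    obtain ⟨ρ, hρ⟩ := exists_isRun htotal s
    exact isLUB_csSup ⟨_, ρ, hρ, rfl⟩ (hbdd s hs)
  refine ⟨φ, ⟨fun s s' hs h => ?_, fun s hs hsT => ?_⟩, hlub⟩
  · have hs' := hs.step htotal h
    rw [ge_iff_le, ← le_sub_iff_add_le]
    refine (hlub s' hs').2 ?_
    rintro _ ⟨ρ, hρ, rfl⟩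
    have hle := (hlub s hs).1 ⟨_, hρ.cons h, rfl⟩
    rw [RunCost.cons c hTerm hρ h (hterminating s' hs' ρ hρ)] at hle
    push_cast at hle
    linarith
  · obtain ⟨ρ, hρ⟩ := exists_isRun htotal s
    have hle := (hlub s hs).1 ⟨ρ, hρ, rfl⟩
    rwa [RunCost.eq_zero c (by rwa [hρ.1]), Int.cast_zero] at hle

theorem IsPF.isAntiPF_neg {S : Type*} {step : S → S → Prop} {Term Init : Set S} {c : S → ℤ}
    {φ : S → ℝ} (h : IsPF step Term Init (-c) φ) : IsAntiPF step Term Init c (-φ) := by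
  refine ⟨fun s s' hs hstep => ?_, fun s hs hsT => ?_⟩
  · have hle := h.1 s s' hs hstep
    simp only [Pi.neg_apply, Int.cast_neg] at hle ⊢
    linarith
  · simpa using h.2 s hs hsT

/-- completeness of PFs and anti-PFs for the DiffCost problem. -/
theorem pf_antipf_complete_for_diffcost {Sn So X : Type*}
    (stepN : Sn → Sn → Prop) (TermN : Set Sn) (cN : Sn → ℤ)
    (stepO : So → So → Prop) (TermO : Set So) (cO : So → ℤ)
    (Θ₀ : Set X) (ιN : X → Sn) (ιO : X → So)
    (htotalN : ∀ s : Sn, ∃ s', stepN s s')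
    (htotalO : ∀ s : So, ∃ s', stepO s s')
    (hTermN : ∀ s ∈ TermN, ∀ s', stepN s s' → s' = s)
    (hTermO : ∀ s ∈ TermO, ∀ s', stepO s s' → s' = s)
    (hterminatingN : Terminating stepN TermN (ιN '' Θ₀))
    (hterminatingO : Terminating stepO TermO (ιO '' Θ₀))
    (hbddN : ∀ s, Reachable stepN (ιN '' Θ₀) s →
      BddAbove {x : ℝ | ∃ ρ : ℕ → Sn, IsRun stepN s ρ ∧ x = (RunCost TermN cN ρ : ℝ)})
    (hbddO : ∀ s, Reachable stepO (ιO '' Θ₀) s →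
      BddBelow {x : ℝ | ∃ ρ : ℕ → So, IsRun stepO s ρ ∧ x = (RunCost TermO cO ρ : ℝ)})
    (t : ℝ) (ht : IsThreshold stepN TermN cN stepO TermO cO Θ₀ ιN ιO t) :
    ∃ (φN : Sn → ℝ) (χO : So → ℝ),
      IsPF stepN TermN (ιN '' Θ₀) cN φN ∧
      IsAntiPF stepO TermO (ιO '' Θ₀) cO χO ∧
      ∀ x ∈ Θ₀, φN (ιN x) - χO (ιO x) ≤ t := by
  obtain ⟨φ, hφ, hφlub⟩ := exists_isPF_isLUB htotalN hTermN hterminatingN hbddN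
  obtain ⟨ψ, hψ, hψlub⟩ := exists_isPF_isLUB (c := -cO) htotalO hTermO hterminatingO
    (by
      intro s hs
      obtain ⟨b, hb⟩ := hbddO s hs
      refine ⟨-b, ?_⟩
      rintro _ ⟨ρ, hρ, rfl⟩
      rw [RunCost.neg, Int.cast_neg, neg_le_neg_iff]
      exact hb ⟨ρ, hρ, rfl⟩)
  refine ⟨φ, -ψ, hφ, hψ.isAntiPF_neg, fun x hx => ?_⟩
  rw [Pi.neg_apply, sub_neg_eq_add, ← le_sub_iff_add_le]
  refine (hφlub _ (.of_mem htotalN ⟨x, hx, rfl⟩)).2 ?_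
  rintro _ ⟨ρN, hρN, rfl⟩
  rw [le_sub_comm]
  refine (hψlub _ (.of_mem htotalO ⟨x, hx, rfl⟩)).2 ?_
  rintro _ ⟨ρO, hρO, rfl⟩
  have hle := ht x hx ρN hρN ρO hρO
  rw [RunCost.neg, Int.cast_neg]
  linarith
end
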